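/- Let (S,+,*) and (T,+,*) be two-sided Ehresmann semigroupoids and φ : S → T a function; regard φ also as a map C(S) → C(T) between the associated local biordered Ehresmann categories. Then φ is a (2,1,1)-morphism if and only if φ : C(S) → C(T) is an inductive functor. Consequently, the composition of two (2,1,1)-morphisms is a (2,1,1)-morphism, and the composition of two inductive functors is an inductive functor. -/

import Mathlib

/-!
The orders and meets of `C(S)` are given by products in `S`, and `s* = t⁺` forces `st` to be
defined, so composites in `C(S)` are products too; hence a (2,1,1)-morphism preserves all of this
structure.

Conversely, `st` is defined exactly when `s*t⁺` is (`EhresmannSgpd.defined_iff`), and every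
defined product of `S` is recovered from the category structure: with `e = s*t⁺`, one has `st =
(se)(et)` (`EhresmannSgpd.mul_eq_factor`), where `se` and `et` are composable in `C(S)`, `se ≤_r
s` has domain `e`, and `et ≤_l t` has codomain `e`. An inductive functor `φ` sends `e` to the
corresponding meet `φ(s)*φ(t)⁺`; since `x ≤_r y` means `x = yx*`, and `x ≤_l y` means `x = x⁺y`,
preservation of the orders gives `φ(se) = φ(s)φ(e)` and `φ(et) = φ(e)φ(t)`. The same factorization
in `T` then yields `φ(st) = φ(s)φ(t)`.

Both composition claims follow directly from the definitions, for arbitrary local biordered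
Ehresmann categories; a functor sends objects to objects because `e = D(e)` for an object `e`.
-/

universe u

/-- A semigroupoid (Exel): a partially defined binary operation, associative in Exel's sense.
`defined s t` means the product `s ⋆ t` is defined; `mul` is a total function whose value is
only meaningful on defined pairs. -/
structure Semigroupoid (S : Type u) where
  defined : S → S → Prop
  mul : S → S → S
  assoc₁ : ∀ s t r, defined s t → defined t r →
    defined (mul s t) r ∧ defined s (mul t r) ∧ mul (mul s t) r = mul s (mul t r)
  assoc₂ : ∀ s t r, defined s t → defined (mul s t) r →
    defined t r ∧ defined s (mul t r) ∧ mul (mul s t) r = mul s (mul t r)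
  assoc₃ : ∀ s t r, defined t r → defined s (mul t r) →
    defined s t ∧ defined (mul s t) r ∧ mul (mul s t) r = mul s (mul t r)

/-- A left Ehresmann semigroupoid. -/
structure LeftEhresmannSgpd (S : Type u) extends Semigroupoid S where
  plus : S → S
  le1 : ∀ s, defined (plus s) s ∧ mul (plus s) s = s
  le2 : ∀ s t, defined (plus s) (plus t) →
    defined (plus t) (plus s) ∧ mul (plus s) (plus t) = mul (plus t) (plus s)
  le3 : ∀ s t, defined (plus s) (plus t) → mul (plus s) (plus t) = plus (mul (plus s) t)
  le4 : ∀ s t, defined s t → plus (mul s t) = plus (mul s (plus t))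

/-- The set of projections `S⁺ = {s⁺ : s ∈ S}`. -/
def LeftEhresmannSgpd.projections {S : Type u} (E : LeftEhresmannSgpd S) : Set S :=
  {e | ∃ s, e = E.plus s}

/-- The relation `s ≤_l t` : `s⁺t` is defined and `s⁺t = s`. -/
def LeftEhresmannSgpd.lel {S : Type u} (E : LeftEhresmannSgpd S) (s t : S) : Prop :=
  E.defined (E.plus s) t ∧ E.mul (E.plus s) t = s

/-- A two-sided Ehresmann semigroupoid. -/
structure EhresmannSgpd (S : Type u) extends Semigroupoid S where
  plus : S → S
  star : S → S
  le1 : ∀ s, defined (plus s) s ∧ mul (plus s) s = s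
  le2 : ∀ s t, defined (plus s) (plus t) →
    defined (plus t) (plus s) ∧ mul (plus s) (plus t) = mul (plus t) (plus s)
  le3 : ∀ s t, defined (plus s) (plus t) → mul (plus s) (plus t) = plus (mul (plus s) t)
  le4 : ∀ s t, defined s t → plus (mul s t) = plus (mul s (plus t))
  re1 : ∀ s, defined s (star s) ∧ mul s (star s) = s
  re2 : ∀ s t, defined (star s) (star t) →
    defined (star t) (star s) ∧ mul (star s) (star t) = mul (star t) (star s)
  re3 : ∀ s t, defined (star s) (star t) → mul (star s) (star t) = star (mul s (star t))
  re4 : ∀ s t, defined s t → star (mul s t) = star (mul (star s) t)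
  plus_star : ∀ s, star (plus s) = plus s
  star_plus : ∀ s, plus (star s) = star s

/-- The set of projections `U = S⁺ = S*`. -/
def EhresmannSgpd.projections {S : Type u} (E : EhresmannSgpd S) : Set S :=
  {e | ∃ s, e = E.plus s}

/-- `s ≤_l t` : `s⁺t` is defined and `s⁺t = s`. -/
def EhresmannSgpd.lel {S : Type u} (E : EhresmannSgpd S) (s t : S) : Prop :=
  E.defined (E.plus s) t ∧ E.mul (E.plus s) t = s

/-- `s ≤_r t` : `ts*` is defined and `ts* = s`. -/
def EhresmannSgpd.ler {S : Type u} (E : EhresmannSgpd S) (s t : S) : Prop :=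
  E.defined t (E.star s) ∧ E.mul t (E.star s) = s

/-- A two-sided restriction semigroupoid. -/
structure RestrictionSgpd (S : Type u) extends Semigroupoid S where
  plus : S → S
  star : S → S
  lr1 : ∀ s, defined (plus s) s ∧ mul (plus s) s = s
  lr2 : ∀ s t, defined (plus s) (plus t) →
    defined (plus t) (plus s) ∧ mul (plus s) (plus t) = mul (plus t) (plus s)
  lr3 : ∀ s t, defined (plus s) (plus t) → mul (plus s) (plus t) = plus (mul (plus s) t)
  lr4 : ∀ s t, defined s t →
    defined (plus (mul s t)) s ∧ mul s (plus t) = mul (plus (mul s t)) s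
  rr1 : ∀ s, defined s (star s) ∧ mul s (star s) = s
  rr2 : ∀ s t, defined (star s) (star t) →
    defined (star t) (star s) ∧ mul (star s) (star t) = mul (star t) (star s)
  rr3 : ∀ s t, defined (star s) (star t) → mul (star s) (star t) = star (mul s (star t))
  rr4 : ∀ s t, defined s t →
    defined t (star (mul s t)) ∧ mul (star s) t = mul t (star (mul s t))
  plus_star : ∀ s, star (plus s) = plus s
  star_plus : ∀ s, plus (star s) = star s

/-- The set of projections of a restriction semigroupoid. -/
def RestrictionSgpd.projections {S : Type u} (R : RestrictionSgpd S) : Set S :=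
  {e | ∃ s, e = R.plus s}

/-- The natural partial order of a restriction semigroupoid: `s ≤ t` iff `s⁺t = s`. -/
def RestrictionSgpd.natLe {S : Type u} (R : RestrictionSgpd S) (s t : S) : Prop :=
  R.defined (R.plus s) t ∧ R.mul (R.plus s) t = s

/-- A local meet-semilattice: a commutative semigroupoid in which every element is idempotent. -/
structure LocalMeetSemilattice (S : Type u) extends Semigroupoid S where
  idem_def : ∀ e, defined e e
  idem : ∀ e, mul e e = e
  comm_def : ∀ e f, defined e f → defined f e
  comm : ∀ e f, defined e f → mul e f = mul f e

/-- A local biordered Ehresmann category. -/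
structure LBEC (C : Type u) where
  obj : Set C
  dom : C → C
  cod : C → C
  comp : C → C → C
  dom_mem : ∀ x, dom x ∈ obj
  cod_mem : ∀ x, cod x ∈ obj
  dom_comp : ∀ x y, dom x = cod y → dom (comp x y) = dom y
  cod_comp : ∀ x y, dom x = cod y → cod (comp x y) = cod x
  comp_assoc : ∀ x y z, dom x = cod y → dom y = cod z →
    comp (comp x y) z = comp x (comp y z)
  dom_obj : ∀ e, e ∈ obj → dom e = e
  cod_obj : ∀ e, e ∈ obj → cod e = e
  comp_id : ∀ x e, e ∈ obj → dom x = e → comp x e = x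
  id_comp : ∀ y e, e ∈ obj → cod y = e → comp e y = y
  lel : C → C → Prop
  ler : C → C → Prop
  lel_refl : ∀ x, lel x x
  lel_antisymm : ∀ x y, lel x y → lel y x → x = y
  lel_trans : ∀ x y z, lel x y → lel y z → lel x z
  ler_refl : ∀ x, ler x x
  ler_antisymm : ∀ x y, ler x y → ler y x → x = y
  ler_trans : ∀ x y z, ler x y → ler y z → ler x z
  lel_dom : ∀ x y, lel x y → lel (dom x) (dom y)
  lel_cod : ∀ x y, lel x y → lel (cod x) (cod y)
  ler_dom : ∀ x y, ler x y → ler (dom x) (dom y)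
  ler_cod : ∀ x y, ler x y → ler (cod x) (cod y)
  lel_comp : ∀ x y x' y', lel x y → lel x' y' → dom x = cod x' → dom y = cod y' →
    lel (comp x x') (comp y y')
  ler_comp : ∀ x y x' y', ler x y → ler x' y' → dom x = cod x' → dom y = cod y' →
    ler (comp x x') (comp y y')
  cores : C → C → C
  cores_le : ∀ e x, e ∈ obj → lel e (cod x) → lel (cores e x) x
  cod_cores : ∀ e x, e ∈ obj → lel e (cod x) → cod (cores e x) = e
  cores_unique : ∀ e x y, e ∈ obj → lel e (cod x) → lel y x → cod y = e → y = cores e x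
  res : C → C → C
  res_le : ∀ x e, e ∈ obj → ler e (dom x) → ler (res x e) x
  dom_res : ∀ x e, e ∈ obj → ler e (dom x) → dom (res x e) = e
  res_unique : ∀ x e y, e ∈ obj → ler e (dom x) → ler y x → dom y = e → y = res x e
  mdef : C → C → Prop
  meet : C → C → C
  meet_mem : ∀ e f, e ∈ obj → f ∈ obj → mdef e f → meet e f ∈ obj
  mdef_self : ∀ e, e ∈ obj → mdef e e
  meet_self : ∀ e, e ∈ obj → meet e e = e
  mdef_comm : ∀ e f, e ∈ obj → f ∈ obj → mdef e f → mdef f e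
  meet_comm : ∀ e f, e ∈ obj → f ∈ obj → mdef e f → meet e f = meet f e
  meet_assoc₁ : ∀ e f g, e ∈ obj → f ∈ obj → g ∈ obj → mdef e f → mdef f g →
    mdef (meet e f) g ∧ mdef e (meet f g) ∧ meet (meet e f) g = meet e (meet f g)
  meet_assoc₂ : ∀ e f g, e ∈ obj → f ∈ obj → g ∈ obj → mdef e f → mdef (meet e f) g →
    mdef f g ∧ mdef e (meet f g) ∧ meet (meet e f) g = meet e (meet f g)
  meet_assoc₃ : ∀ e f g, e ∈ obj → f ∈ obj → g ∈ obj → mdef f g → mdef e (meet f g) →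
    mdef e f ∧ mdef (meet e f) g ∧ meet (meet e f) g = meet e (meet f g)
  ec4l : ∀ e f, e ∈ obj → f ∈ obj → (lel e f ↔ mdef e f ∧ meet e f = e)
  ec4r : ∀ e f, e ∈ obj → f ∈ obj → (ler e f ↔ mdef e f ∧ meet e f = e)
  ec5 : ∀ x z, (∃ y, lel x y ∧ ler y z) ↔ (∃ y, ler x y ∧ lel y z)
  ec6 : ∀ x y e, e ∈ obj → lel x y → mdef (dom x) e →
    lel (res x (meet (dom x) e)) (res y (meet (dom y) e))
  ec7 : ∀ x y e, e ∈ obj → ler x y → mdef e (cod x) →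
    ler (cores (meet e (cod x)) x) (cores (meet e (cod y)) y)

/-- `x ⊗ y` is defined iff `D(x) ∧ R(y)` is defined. -/
def LBEC.pdef {C : Type u} (E : LBEC C) (x y : C) : Prop :=
  E.mdef (E.dom x) (E.cod y)

/-- The pseudo-product `x ⊗ y = (x|e) ∘ (e|y)` where `e = D(x) ∧ R(y)`. -/
def LBEC.pprod {C : Type u} (E : LBEC C) (x y : C) : C :=
  E.comp (E.res x (E.meet (E.dom x) (E.cod y))) (E.cores (E.meet (E.dom x) (E.cod y)) y)

/-- A locally inductive category. -/
structure LInductiveCat (C : Type u) where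
  obj : Set C
  dom : C → C
  cod : C → C
  comp : C → C → C
  dom_mem : ∀ x, dom x ∈ obj
  cod_mem : ∀ x, cod x ∈ obj
  dom_comp : ∀ x y, dom x = cod y → dom (comp x y) = dom y
  cod_comp : ∀ x y, dom x = cod y → cod (comp x y) = cod x
  comp_assoc : ∀ x y z, dom x = cod y → dom y = cod z →
    comp (comp x y) z = comp x (comp y z)
  dom_obj : ∀ e, e ∈ obj → dom e = e
  cod_obj : ∀ e, e ∈ obj → cod e = e
  comp_id : ∀ x e, e ∈ obj → dom x = e → comp x e = x
  id_comp : ∀ y e, e ∈ obj → cod y = e → comp e y = y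
  le : C → C → Prop
  le_refl : ∀ x, le x x
  le_antisymm : ∀ x y, le x y → le y x → x = y
  le_trans : ∀ x y z, le x y → le y z → le x z
  le_dom : ∀ x y, le x y → le (dom x) (dom y)
  le_cod : ∀ x y, le x y → le (cod x) (cod y)
  le_comp : ∀ x y x' y', le x y → le x' y' → dom x = cod x' → dom y = cod y' →
    le (comp x x') (comp y y')
  res : C → C → C
  res_le : ∀ x e, e ∈ obj → le e (dom x) → le (res x e) x
  dom_res : ∀ x e, e ∈ obj → le e (dom x) → dom (res x e) = e
  res_unique : ∀ x e y, e ∈ obj → le e (dom x) → le y x → dom y = e → y = res x e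
  cores : C → C → C
  cores_le : ∀ e x, e ∈ obj → le e (cod x) → le (cores e x) x
  cod_cores : ∀ e x, e ∈ obj → le e (cod x) → cod (cores e x) = e
  cores_unique : ∀ e x y, e ∈ obj → le e (cod x) → le y x → cod y = e → y = cores e x
  mdef : C → C → Prop
  meet : C → C → C
  meet_mem : ∀ e f, e ∈ obj → f ∈ obj → mdef e f → meet e f ∈ obj
  mdef_self : ∀ e, e ∈ obj → mdef e e
  meet_self : ∀ e, e ∈ obj → meet e e = e
  mdef_comm : ∀ e f, e ∈ obj → f ∈ obj → mdef e f → mdef f e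
  meet_comm : ∀ e f, e ∈ obj → f ∈ obj → mdef e f → meet e f = meet f e
  meet_assoc₁ : ∀ e f g, e ∈ obj → f ∈ obj → g ∈ obj → mdef e f → mdef f g →
    mdef (meet e f) g ∧ mdef e (meet f g) ∧ meet (meet e f) g = meet e (meet f g)
  meet_assoc₂ : ∀ e f g, e ∈ obj → f ∈ obj → g ∈ obj → mdef e f → mdef (meet e f) g →
    mdef f g ∧ mdef e (meet f g) ∧ meet (meet e f) g = meet e (meet f g)
  meet_assoc₃ : ∀ e f g, e ∈ obj → f ∈ obj → g ∈ obj → mdef f g → mdef e (meet f g) →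
    mdef e f ∧ mdef (meet e f) g ∧ meet (meet e f) g = meet e (meet f g)
  le_meet : ∀ e f, e ∈ obj → f ∈ obj → (le e f ↔ mdef e f ∧ meet e f = e)

/-- `Cat` is the local biordered Ehresmann category `C(S)` associated with the two-sided
Ehresmann semigroupoid `E`. -/
def IsCofS {S : Type u} (E : EhresmannSgpd S) (Cat : LBEC S) : Prop :=
  Cat.obj = E.projections ∧
  Cat.dom = E.star ∧
  Cat.cod = E.plus ∧
  (∀ s t, E.star s = E.plus t → Cat.comp s t = E.mul s t) ∧
  Cat.lel = E.lel ∧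
  Cat.ler = E.ler ∧
  (∀ e f, e ∈ E.projections → f ∈ E.projections →
    (Cat.mdef e f ↔ E.defined e f) ∧ (E.defined e f → Cat.meet e f = E.mul e f))

/-- `E` is the two-sided Ehresmann semigroupoid `S(C)` associated with the local biordered
Ehresmann category `Cat`. -/
def IsSofC {C : Type u} (Cat : LBEC C) (E : EhresmannSgpd C) : Prop :=
  (E.defined = Cat.pdef) ∧
  (∀ x y, E.defined x y → E.mul x y = Cat.pprod x y) ∧
  E.plus = Cat.cod ∧
  E.star = Cat.dom

/-- `L` is the locally inductive category `C(S)` associated with the two-sided restriction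
semigroupoid `R`. -/
def IsCofSRes {S : Type u} (R : RestrictionSgpd S) (L : LInductiveCat S) : Prop :=
  L.obj = R.projections ∧
  L.dom = R.star ∧
  L.cod = R.plus ∧
  (∀ s t, R.star s = R.plus t → L.comp s t = R.mul s t) ∧
  L.le = R.natLe ∧
  (∀ e f, e ∈ R.projections → f ∈ R.projections →
    (L.mdef e f ↔ R.defined e f) ∧ (R.defined e f → L.meet e f = R.mul e f))

/-- `t` is a pseudo-inverse of `s` in the semigroupoid `Sg`. -/
def Semigroupoid.PInv {S : Type u} (Sg : Semigroupoid S) (s t : S) : Prop :=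
  Sg.defined s t ∧ Sg.defined t s ∧ Sg.mul (Sg.mul s t) s = s ∧ Sg.mul (Sg.mul t s) t = t

/-- The restriction semigroupoid `R` is an inverse semigroupoid with `s⁺ = ss⁻¹`, `s* = s⁻¹s`. -/
def RestrictionSgpd.IsInverse {S : Type u} (R : RestrictionSgpd S) : Prop :=
  ∃ inv : S → S,
    (∀ s, R.toSemigroupoid.PInv s (inv s)) ∧
    (∀ s t, R.toSemigroupoid.PInv s t → t = inv s) ∧
    (∀ s, R.plus s = R.mul s (inv s) ∧ R.star s = R.mul (inv s) s)

/-- `y` is an inverse of `x` in the category `L`. -/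
def LInductiveCat.IsInv {C : Type u} (L : LInductiveCat C) (x y : C) : Prop :=
  L.dom y = L.cod x ∧ L.cod y = L.dom x ∧ L.comp x y = L.cod x ∧ L.comp y x = L.dom x

/-- The category `L` is a groupoid: every element has a unique inverse. -/
def LInductiveCat.IsGroupoid {C : Type u} (L : LInductiveCat C) : Prop :=
  ∀ x, ∃! y, L.IsInv x y

/-- Inversion in `L` is order-preserving (condition (ig1) of locally inductive groupoids). -/
def LInductiveCat.InvOrdPres {C : Type u} (L : LInductiveCat C) : Prop :=
  ∀ x y x' y', L.IsInv x x' → L.IsInv y y' → L.le x y → L.le x' y'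

/-- `(S0, D, R)` is a category structure on the semigroupoid `Sg`. -/
def Semigroupoid.CatStructOn {S : Type u} (Sg : Semigroupoid S) (S0 : Set S)
    (D R : S → S) : Prop :=
  (∀ s, D s ∈ S0) ∧ (∀ s, R s ∈ S0) ∧
  (∀ s t, Sg.defined s t ↔ D s = R t) ∧
  (∀ s t, Sg.defined s t → D (Sg.mul s t) = D t ∧ R (Sg.mul s t) = R s) ∧
  (∀ e, e ∈ S0 → D e = e ∧ R e = e) ∧
  (∀ s, Sg.mul s (D s) = s) ∧
  (∀ t, Sg.mul (R t) t = t)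

/-- `(U0, d, r)` is a category structure on the sub-semigroupoid of `Sg` with underlying
set `U`. -/
def Semigroupoid.CatStructOnSubset {S : Type u} (Sg : Semigroupoid S) (U : Set S)
    (U0 : Set S) (d r : S → S) : Prop :=
  U0 ⊆ U ∧
  (∀ e, e ∈ U → d e ∈ U0 ∧ r e ∈ U0) ∧
  (∀ e f, e ∈ U → f ∈ U → (Sg.defined e f ↔ d e = r f)) ∧
  (∀ e f, e ∈ U → f ∈ U → Sg.defined e f →
    d (Sg.mul e f) = d f ∧ r (Sg.mul e f) = r e) ∧
  (∀ e, e ∈ U0 → d e = e ∧ r e = e) ∧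
  (∀ e, e ∈ U → Sg.mul e (d e) = e ∧ Sg.mul (r e) e = e)

/-- A (2,1,1)-morphism between two-sided Ehresmann semigroupoids. -/
def Is211 {S : Type u} {T : Type u} (E : EhresmannSgpd S) (F : EhresmannSgpd T)
    (φ : S → T) : Prop :=
  (∀ s t, E.defined s t →
    F.defined (φ s) (φ t) ∧ φ (E.mul s t) = F.mul (φ s) (φ t)) ∧
  (∀ s, φ (E.plus s) = F.plus (φ s)) ∧
  (∀ s, φ (E.star s) = F.star (φ s))

/-- An inductive functor between local biordered Ehresmann categories. -/
def IndFunctor {C : Type u} {D : Type u} (A : LBEC C) (B : LBEC D) (φ : C → D) : Prop :=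
  (∀ x, φ (A.dom x) = B.dom (φ x)) ∧
  (∀ x, φ (A.cod x) = B.cod (φ x)) ∧
  (∀ x y, A.dom x = A.cod y → φ (A.comp x y) = B.comp (φ x) (φ y)) ∧
  (∀ x y, A.lel x y → B.lel (φ x) (φ y)) ∧
  (∀ x y, A.ler x y → B.ler (φ x) (φ y)) ∧
  (∀ e f, e ∈ A.obj → f ∈ A.obj → A.mdef e f →
    B.mdef (φ e) (φ f) ∧ φ (A.meet e f) = B.meet (φ e) (φ f))

/-- A ∨-premorphism between two-sided restriction semigroupoids. -/
def VPre {S : Type u} {T : Type u} (R1 : RestrictionSgpd S) (R2 : RestrictionSgpd T)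
    (φ : S → T) : Prop :=
  (∀ s t, R1.defined s t →
    R2.defined (φ s) (φ t) ∧ R2.natLe (φ (R1.mul s t)) (R2.mul (φ s) (φ t))) ∧
  (∀ s, φ (R1.plus s) = R2.plus (φ s)) ∧
  (∀ s, φ (R1.star s) = R2.star (φ s))

/-- An ordered functor between locally inductive categories. -/
def OrdFunctor {C : Type u} {D : Type u} (A : LInductiveCat C) (B : LInductiveCat D)
    (φ : C → D) : Prop :=
  (∀ x, φ (A.dom x) = B.dom (φ x)) ∧
  (∀ x, φ (A.cod x) = B.cod (φ x)) ∧
  (∀ x y, A.dom x = A.cod y → φ (A.comp x y) = B.comp (φ x) (φ y)) ∧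
  (∀ x y, A.le x y → B.le (φ x) (φ y))

/-- Composition of binary relations on `X`. -/
def rcomp {X : Type u} (R S : Set (X × X)) : Set (X × X) :=
  {p | ∃ z, (p.1, z) ∈ R ∧ (z, p.2) ∈ S}

/-- `R⁺ = {(x,x) : (x,y) ∈ R for some y}`. -/
def rplus {X : Type u} (R : Set (X × X)) : Set (X × X) :=
  {p | p.1 = p.2 ∧ ∃ y, (p.1, y) ∈ R}

/-- `R* = {(y,y) : (x,y) ∈ R for some x}`. -/
def rstar {X : Type u} (R : Set (X × X)) : Set (X × X) :=
  {p | p.1 = p.2 ∧ ∃ x, (x, p.2) ∈ R}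
/-! ### Factorization of products in an Ehresmann semigroupoid -/

namespace EhresmannSgpd

variable {S : Type u} (E : EhresmannSgpd S)

/-- Definedness of a product depends only on `s*` and `t⁺`: split off the units of `s = ss*` and
`t = t⁺t` and reassociate. -/
theorem defined_iff (s t : S) : E.defined s t ↔ E.defined (E.star s) (E.plus t) := by
  obtain ⟨hs, hs'⟩ := E.re1 s
  obtain ⟨ht, ht'⟩ := E.le1 t
  constructor
  · intro h
    have h1 : E.defined (E.star s) t := (E.assoc₂ s (E.star s) t hs (by rwa [hs'])).1
    exact (E.assoc₃ (E.star s) (E.plus t) t ht (by rwa [ht'])).1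
  · intro h
    have h1 := (E.assoc₁ (E.star s) (E.plus t) t h ht).2.1
    rw [ht'] at h1
    have h2 := (E.assoc₁ s (E.star s) t hs h1).1
    rwa [hs'] at h2

theorem defined_of_star_eq_plus {s t : S} (h : E.star s = E.plus t) : E.defined s t := by
  have h1 := (E.assoc₁ s (E.star s) t (E.re1 s).1 (by rw [h]; exact (E.le1 t).1)).1
  rwa [(E.re1 s).2] at h1

theorem star_mem (s : S) : E.star s ∈ E.projections := ⟨E.star s, (E.star_plus s).symm⟩

theorem plus_mem (s : S) : E.plus s ∈ E.projections := ⟨s, rfl⟩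

/-- The projection `e = s*t⁺`, the meet of `D(s)` and `R(t)` in `C(S)`;
meaningful only when `st` is defined. -/
def mid (s t : S) : S := E.mul (E.star s) (E.plus t)

theorem plus_mid {s t : S} (h : E.defined s t) : E.plus (E.mid s t) = E.mid s t := by
  have hd := (E.defined_iff s t).1 h
  have h3 := E.le3 (E.star s) (E.plus t)
  have ht : E.plus (E.plus t) = E.plus t := by
    rw [← E.plus_star t, E.star_plus]
  rw [E.star_plus, ht] at h3
  exact (h3 hd).symm

theorem star_mid {s t : S} (h : E.defined s t) : E.star (E.mid s t) = E.mid s t := by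
  rw [← E.plus_mid h, E.plus_star]

theorem mul_mid {s t : S} (h : E.defined s t) :
    E.defined s (E.mid s t) ∧ E.defined s (E.plus t) ∧
      E.mul s (E.mid s t) = E.mul s (E.plus t) := by
  have hd := (E.defined_iff s t).1 h
  obtain ⟨h1, h2, h3⟩ := E.assoc₁ s (E.star s) (E.plus t) (E.re1 s).1 hd
  rw [(E.re1 s).2] at h1 h3
  exact ⟨h2, h1, h3.symm⟩

theorem mid_mul {s t : S} (h : E.defined s t) :
    E.defined (E.mid s t) t ∧ E.defined (E.star s) t ∧
      E.mul (E.mid s t) t = E.mul (E.star s) t := by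
  have hd := (E.defined_iff s t).1 h
  obtain ⟨h1, h2, h3⟩ := E.assoc₁ (E.star s) (E.plus t) t hd (E.le1 t).1
  rw [(E.le1 t).2] at h2 h3
  exact ⟨h1, h2, h3⟩

theorem star_mul_mid {s t : S} (h : E.defined s t) :
    E.star (E.mul s (E.mid s t)) = E.mid s t := by
  have hd := (E.defined_iff s t).1 h
  have hss : E.defined (E.star s) (E.star s) ∧ E.mul (E.star s) (E.star s) = E.star s := by
    have := E.le1 (E.star s)
    rwa [E.star_plus] at this
  have h3 := (E.assoc₁ _ _ _ hss.1 hd).2.2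
  rw [hss.2] at h3
  rw [E.re4 _ _ (E.mul_mid h).1]
  -- Projections are idempotent, so `s*e = e`.
  have : E.mul (E.star s) (E.mid s t) = E.mid s t := h3.symm
  rw [this, E.star_mid h]

theorem plus_mid_mul {s t : S} (h : E.defined s t) :
    E.plus (E.mul (E.mid s t) t) = E.mid s t := by
  have hd := (E.defined_iff s t).1 h
  have htt : E.defined (E.plus t) (E.plus t) ∧ E.mul (E.plus t) (E.plus t) = E.plus t := by
    have := E.re1 (E.plus t)
    rwa [E.plus_star] at this
  have h3 := (E.assoc₁ _ _ _ hd htt.1).2.2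
  rw [htt.2] at h3
  rw [E.le4 _ _ (E.mid_mul h).1]
  -- Projections are idempotent, so `et⁺ = e`.
  have : E.mul (E.mid s t) (E.plus t) = E.mid s t := h3
  rw [this, E.plus_mid h]

theorem mul_mid_ler {s t : S} (h : E.defined s t) : E.ler (E.mul s (E.mid s t)) s := by
  unfold ler
  rw [E.star_mul_mid h]
  exact ⟨(E.mul_mid h).1, rfl⟩

theorem mid_mul_lel {s t : S} (h : E.defined s t) : E.lel (E.mul (E.mid s t) t) t := by
  unfold lel
  rw [E.plus_mid_mul h]
  exact ⟨(E.mid_mul h).1, rfl⟩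

/-- Every defined product `st` is the composite in `C(S)` of the restriction `se` and the
corestriction `et`, where `e = s*t⁺`. -/
theorem mul_eq_factor {s t : S} (h : E.defined s t) :
    E.mul s t = E.mul (E.mul s (E.mid s t)) (E.mul (E.mid s t) t) := by
  have hd := (E.defined_iff s t).1 h
  have hs := E.le2 (E.star s) t
  rw [E.star_plus] at hs
  obtain ⟨hd', hcomm⟩ := hs hd
  obtain ⟨a1, a2, a3⟩ := E.mul_mid h
  obtain ⟨b1, b2, b3⟩ := E.mid_mul h
  have h1 := E.assoc₁ s (E.plus t) (E.star s) a2 hd'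
  have h2 := E.assoc₁ (E.mul s (E.plus t)) (E.star s) t h1.1 b2
  have h3 := E.assoc₁ s (E.plus t) t a2 (E.le1 t).1
  -- `(st⁺)(s*t) = ((st⁺)s*)t = (s(s*t⁺))t = (st⁺)t = st`, as the projections commute.
  rw [a3, b3, ← h2.2.2, h1.2.2, ← hcomm]
  change _ = E.mul (E.mul s (E.mid s t)) t
  rw [a3, h3.2.2, (E.le1 t).2]

end EhresmannSgpd

/-! ### Morphisms and inductive functors -/

theorem Is211.indFunctor {S T : Type u} {E : EhresmannSgpd S} {F : EhresmannSgpd T}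
    {CS : LBEC S} {CT : LBEC T} (hE : IsCofS E CS) (hF : IsCofS F CT) {φ : S → T}
    (h : Is211 E F φ) : IndFunctor CS CT φ := by
  obtain ⟨eo, ed, ec, ecomp, el, er, em⟩ := hE
  obtain ⟨fo, fd, fc, fcomp, fl, fr, fm⟩ := hF
  obtain ⟨hm, hp, hs⟩ := h
  unfold IndFunctor
  rw [eo, ed, ec, el, er, fd, fc, fl, fr]
  refine ⟨hs, hp, ?_, ?_, ?_, ?_⟩
  · intro x y hxy
    have hxy' : F.star (φ x) = F.plus (φ y) := by rw [← hs, ← hp, hxy]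
    rw [ecomp x y hxy, fcomp _ _ hxy']
    exact (hm x y (E.defined_of_star_eq_plus hxy)).2
  · rintro x y ⟨h1, h2⟩
    have h3 := hm _ _ h1
    rw [hp, h2] at h3
    exact ⟨h3.1, h3.2.symm⟩
  · rintro x y ⟨h1, h2⟩
    have h3 := hm _ _ h1
    rw [hs, h2] at h3
    exact ⟨h3.1, h3.2.symm⟩
  · intro e f he hf hef
    have hproj : ∀ g ∈ E.projections, φ g ∈ F.projections := by
      rintro _ ⟨s, rfl⟩
      exact ⟨φ s, hp s⟩
    have hd := (em e f he hf).1.1 hef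
    have h3 := hm _ _ hd
    have h4 := fm _ _ (hproj e he) (hproj f hf)
    rw [(em e f he hf).2 hd, h4.2 h3.1]
    exact ⟨h4.1.2 h3.1, h3.2⟩

theorem IndFunctor.is211 {S T : Type u} {E : EhresmannSgpd S} {F : EhresmannSgpd T}
    {CS : LBEC S} {CT : LBEC T} (hE : IsCofS E CS) (hF : IsCofS F CT) {φ : S → T}
    (h : IndFunctor CS CT φ) : Is211 E F φ := by
  obtain ⟨eo, ed, ec, ecomp, el, er, em⟩ := hE
  obtain ⟨fo, fd, fc, fcomp, fl, fr, fm⟩ := hF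
  unfold IndFunctor at h
  rw [eo, ed, ec, el, er, fd, fc, fl, fr] at h
  obtain ⟨hs, hp, hcomp, hl, hr, hmeet⟩ := h
  refine ⟨?_, hp, hs⟩
  intro s t hst
  have hd := (E.defined_iff s t).1 hst
  have hem := em _ _ (E.star_mem s) (E.plus_mem t)
  have hfm := fm _ _ (F.star_mem (φ s)) (F.plus_mem (φ t))
  obtain ⟨m1, m2⟩ := hmeet _ _ (E.star_mem s) (E.plus_mem t) (hem.1.2 hd)
  rw [hs, hp] at m1 m2
  have hd' := hfm.1.1 m1
  have hst' := (F.defined_iff _ _).2 hd'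
  rw [hem.2 hd, hfm.2 hd'] at m2
  have hmid : φ (E.mid s t) = F.mid (φ s) (φ t) := m2
  have hxs : φ (E.mul s (E.mid s t)) = F.mul (φ s) (F.mid (φ s) (φ t)) := by
    have := (hr _ _ (E.mul_mid_ler hst)).2
    rwa [← hs, E.star_mul_mid hst, hmid, eq_comm] at this
  have hty : φ (E.mul (E.mid s t) t) = F.mul (F.mid (φ s) (φ t)) (φ t) := by
    have := (hl _ _ (E.mid_mul_lel hst)).2
    rwa [← hp, E.plus_mid_mul hst, hmid, eq_comm] at this
  have hc : E.star (E.mul s (E.mid s t)) = E.plus (E.mul (E.mid s t) t) := by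
    rw [E.star_mul_mid hst, E.plus_mid_mul hst]
  have hc' : F.star (φ (E.mul s (E.mid s t))) = F.plus (φ (E.mul (E.mid s t) t)) := by
    rw [← hs, ← hp, hc]
  refine ⟨hst', ?_⟩
  rw [E.mul_eq_factor hst, ← ecomp _ _ hc, hcomp _ _ hc, fcomp _ _ hc', hxs, hty,
    ← F.mul_eq_factor hst']

/-! ### Composition -/

theorem Is211.comp {S T W : Type u} {E : EhresmannSgpd S} {F : EhresmannSgpd T}
    {G : EhresmannSgpd W} {φ : S → T} {ψ : T → W}
    (h : Is211 E F φ) (k : Is211 F G ψ) : Is211 E G (ψ ∘ φ) := by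
  obtain ⟨h1, h2, h3⟩ := h
  obtain ⟨k1, k2, k3⟩ := k
  refine ⟨fun s t hst => ?_, fun s => ?_, fun s => ?_⟩
  · obtain ⟨a, b⟩ := h1 s t hst
    obtain ⟨c, d⟩ := k1 _ _ a
    exact ⟨c, by simp only [Function.comp, b, d]⟩
  · simp only [Function.comp, h2, k2]
  · simp only [Function.comp, h3, k3]

theorem IndFunctor.comp {C D W : Type u} {A : LBEC C} {B : LBEC D} {K : LBEC W}
    {φ : C → D} {ψ : D → W}
    (h : IndFunctor A B φ) (k : IndFunctor B K ψ) : IndFunctor A K (ψ ∘ φ) := by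
  obtain ⟨h1, h2, h3, h4, h5, h6⟩ := h
  obtain ⟨k1, k2, k3, k4, k5, k6⟩ := k
  -- An object `e` equals `D(e)`, so `φ e = D(φ e)` is an object.
  have hobj : ∀ e ∈ A.obj, φ e ∈ B.obj := by
    intro e he
    rw [← A.dom_obj e he, h1]
    exact B.dom_mem _
  refine ⟨fun x => ?_, fun x => ?_, fun x y hxy => ?_, fun x y hxy => k4 _ _ (h4 _ _ hxy),
    fun x y hxy => k5 _ _ (h5 _ _ hxy), fun e f he hf hef => ?_⟩
  · simp only [Function.comp, h1, k1]
  · simp only [Function.comp, h2, k2]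
  · have : B.dom (φ x) = B.cod (φ y) := by rw [← h1, ← h2, hxy]
    simp only [Function.comp, h3 x y hxy, k3 _ _ this]
  · obtain ⟨a, b⟩ := h6 e f he hf hef
    obtain ⟨c, d⟩ := k6 _ _ (hobj e he) (hobj f hf) a
    exact ⟨c, by simp only [Function.comp, b, d]⟩

/-- For two-sided Ehresmann semigroupoids `S`, `T` with associated local
biordered Ehresmann categories `C(S)`, `C(T)`, a function `φ : S → T` is a (2,1,1)-morphism
iff `φ : C(S) → C(T)` is an inductive functor; consequently, compositions of
(2,1,1)-morphisms are (2,1,1)-morphisms and compositions of inductive functors are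
inductive functors. -/
theorem stmt18 :
    (∀ (S T : Type u) (E : EhresmannSgpd S) (F : EhresmannSgpd T)
      (CS : LBEC S) (CT : LBEC T), IsCofS E CS → IsCofS F CT →
      ∀ φ : S → T, Is211 E F φ ↔ IndFunctor CS CT φ) ∧
    (∀ (S T W : Type u) (E : EhresmannSgpd S) (F : EhresmannSgpd T)
      (G : EhresmannSgpd W) (φ : S → T) (ψ : T → W),
      Is211 E F φ → Is211 F G ψ → Is211 E G (ψ ∘ φ)) ∧
    (∀ (C D W : Type u) (A : LBEC C) (B : LBEC D) (K : LBEC W)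
      (φ : C → D) (ψ : D → W),
      IndFunctor A B φ → IndFunctor B K ψ → IndFunctor A K (ψ ∘ φ)) := by
  refine ⟨?_, ?_, ?_⟩
  · intro S T E F CS CT hE hF φ
    exact ⟨Is211.indFunctor hE hF, IndFunctor.is211 hE hF⟩
  · intro S T W E F G φ ψ h k
    exact h.comp k
  · intro C D W A B K φ ψ h k
    exact h.comp k
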